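/- Let N₁ : ℝ → ℝ satisfy N₁(G) ≥ 2 for all large G and ∫₂^{N₁(G)} (−P(t)) dt = a·G + O(1) as G → ∞. Let g : ℝ → ℝ satisfy g(T) − T ∼ (1−c)·T/ln T as T → ∞, and assume the prime number theorem in the form π(ρ) ∼ ρ/ln ρ as ρ → ∞. Then for every fixed x > 0, lim_{ρ→∞} (1/π(ρ)) · ∫_{N₁(xρ/(a(1−c)))}^{N₁(g(xρ/(a(1−c))))} (−P(t)) dt = x. -/

import Mathlib

/-!
With `F G = ∫₂^{N₁ G} (-P)` and `T = κρ`, `κ = x / (a (1 - c))`, the integral in the statement is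
`F (g T) - F T` by additivity (`intervalIntegrable_neg_P`). Since `F G = a G + O(1)` and `g T → ∞`,
it equals `a (g T - T) + O(1)`, and `a (g T - T) ∼ a (1 - c) T / log T = x ρ / log (κρ) ∼ x ρ / log ρ`
(`isEquivalent_log_const_mul`). The error `O(1)` is negligible against `ρ / log ρ`, and dividing by
`π(ρ) ∼ ρ / log ρ` gives the limit `x`.
-/

open Filter Real Asymptotics MeasureTheory

noncomputable def pichar (t : ℝ) : ℝ := (Nat.primeCounting ⌊t⌋₊ : ℝ)

noncomputable def P (t : ℝ) : ℝ := pichar t - ∫ u in (2:ℝ)..t, 1 / Real.log u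

noncomputable def a : ℝ := Real.exp 4.5

noncomputable def c : ℝ := Real.eulerMascheroniConstant

noncomputable def Z (t : ℝ) : ℝ := ‖riemannZeta (1/2 + (t : ℂ) * Complex.I)‖ ^ 2

lemma monotone_pichar : Monotone pichar := fun _ _ h =>
  Nat.cast_le.mpr (Nat.monotone_primeCounting (Nat.floor_mono h))

lemma intervalIntegrable_neg_P {b : ℝ} (hb : 2 ≤ b) :
    IntervalIntegrable (fun t => -P t) volume 2 b := by
  have hlog : IntervalIntegrable (fun u : ℝ => 1 / Real.log u) volume 2 b := by
    refine ContinuousOn.intervalIntegrable fun u hu => ?_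
    rw [Set.uIcc_of_le hb] at hu
    have hu2 : 2 ≤ u := hu.1
    have hne : Real.log u ≠ 0 := (Real.log_pos (by linarith)).ne'
    exact (continuousAt_const.div (Real.continuousAt_log (by linarith)) hne).continuousWithinAt
  have hprim : IntervalIntegrable (fun t => ∫ u in (2:ℝ)..t, 1 / Real.log u) volume 2 b :=
    (intervalIntegral.continuousOn_primitive_interval' hlog
      Set.left_mem_uIcc).intervalIntegrable
  exact (monotone_pichar.intervalIntegrable.sub hprim).neg

lemma isEquivalent_log_const_mul {k : ℝ} (hk : 0 < k) :
    (fun r : ℝ => Real.log (k * r)) ~[atTop] Real.log := by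
  have h1 : (fun _ : ℝ => Real.log k) =o[atTop] Real.log :=
    isLittleO_const_left.2 (Or.inr (tendsto_norm_atTop_atTop.comp Real.tendsto_log_atTop))
  refine (IsEquivalent.refl.add_isLittleO h1).congr_left ?_
  filter_upwards [eventually_gt_atTop 0] with r hr
  simp only [Pi.add_apply]
  rw [Real.log_mul hk.ne' hr.ne', add_comm]

lemma tendsto_id_div_log : Tendsto (fun r : ℝ => r / Real.log r) atTop atTop := by
  have h0 : Tendsto (fun r : ℝ => Real.log r / r) atTop (nhds 0) :=
    Real.isLittleO_log_id_atTop.tendsto_div_nhds_zero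
  have h1 : Tendsto (fun r : ℝ => Real.log r / r) atTop (nhdsWithin 0 (Set.Ioi 0)) := by
    refine tendsto_nhdsWithin_iff.2 ⟨h0, ?_⟩
    filter_upwards [eventually_gt_atTop 1] with r hr
    exact div_pos (Real.log_pos hr) (by linarith)
  exact h1.inv_tendsto_nhdsGT_zero.congr fun r => by simp

/-- Theorem 5: the second `Pζ`-functional attains the value `x` for every fixed `x > 0`. -/
theorem stmt_12 (N₁ : ℝ → ℝ)
    (hN2 : ∀ᶠ G in atTop, 2 ≤ N₁ G)
    (hN : (fun G => (∫ t in (2:ℝ)..N₁ G, -P t) - a * G) =O[atTop] (fun _ => (1:ℝ)))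
    (g : ℝ → ℝ)
    (hg1 : (fun T => g T - T) ~[atTop] (fun T => (1 - c) * T / Real.log T))
    (hPNT : (fun ρ => pichar ρ) ~[atTop] (fun ρ => ρ / Real.log ρ))
    (x : ℝ) (hx : 0 < x) :
    Tendsto (fun ρ => (1 / pichar ρ) *
      ∫ t in N₁ (x * ρ / (a * (1 - c)))..N₁ (g (x * ρ / (a * (1 - c)))), -P t)
      atTop (nhds x) := by
  have hc : 0 < 1 - c := by
    have := Real.eulerMascheroniConstant_lt_two_thirds
    unfold c
    linarith
  have ha : 0 < a := Real.exp_pos _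
  have hk : 0 < x / (a * (1 - c)) := by positivity
  set k := x / (a * (1 - c)) with hkdef
  have hT (r : ℝ) : x * r / (a * (1 - c)) = k * r := by rw [hkdef]; ring
  simp only [hT]
  have hTtop : Tendsto (fun r : ℝ => k * r) atTop atTop := tendsto_id.const_mul_atTop hk
  have hdiff : Tendsto (fun T => g T - T) atTop atTop := by
    refine hg1.symm.tendsto_atTop ?_
    exact (tendsto_id_div_log.const_mul_atTop hc).congr fun r => by ring
  have hgtop : Tendsto g atTop atTop :=
    (hdiff.atTop_add_atTop tendsto_id).congr fun r => by simp
  have hgT := hgtop.comp hTtop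
  have hbig : (fun r => (∫ t in N₁ (k * r)..N₁ (g (k * r)), -P t) - a * (g (k * r) - k * r))
      =O[atTop] (fun _ => (1:ℝ)) := by
    have hNg := hN.comp_tendsto hgT
    have hNT := hN.comp_tendsto hTtop
    simp only [Function.comp_def] at hNg hNT
    refine (hNg.sub hNT).congr' ?_ .rfl
    filter_upwards [hgT.eventually hN2, hTtop.eventually hN2] with r h1 h2
    have := intervalIntegral.integral_interval_sub_left
      (intervalIntegrable_neg_P h1) (intervalIntegrable_neg_P h2)
    simp only [Function.comp_apply] at this ⊢
    rw [← this]
    ring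
  have hmain : (fun r => a * (g (k * r) - k * r)) ~[atTop] (fun r => x * (r / Real.log r)) := by
    have h1 : (fun r => a * (g (k * r) - k * r)) ~[atTop]
        (fun r => a * ((1 - c) * (k * r) / Real.log (k * r))) :=
      (IsEquivalent.refl (u := fun _ : ℝ => a)).mul (hg1.comp_tendsto hTtop)
    have h2 : (fun r => (x * r) / Real.log (k * r)) ~[atTop] (fun r => (x * r) / Real.log r) :=
      IsEquivalent.refl.div (isEquivalent_log_const_mul hk)
    have e : ∀ r, a * ((1 - c) * (k * r) / Real.log (k * r)) = (x * r) / Real.log (k * r) := by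
      intro r
      have hak : a * (1 - c) * k = x := by rw [hkdef]; field_simp
      rw [← hak]; ring
    simp only [e] at h1
    simpa only [mul_div_assoc] using h1.trans h2
  have hsmall : (fun _ : ℝ => (1:ℝ)) =o[atTop] (fun r => x * (r / Real.log r)) :=
    isLittleO_const_left.2 (Or.inr
      (tendsto_norm_atTop_atTop.comp (tendsto_id_div_log.const_mul_atTop hx)))
  have hI : (fun r => ∫ t in N₁ (k * r)..N₁ (g (k * r)), -P t) ~[atTop]
      (fun r => x * (r / Real.log r)) := by
    refine (hmain.add_isLittleO (hbig.trans_isLittleO hsmall)).congr_left (.of_forall fun r => ?_)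
    simp
  have hquot := hI.div hPNT
  have hlim : Tendsto (fun r : ℝ => x * (r / Real.log r) / (r / Real.log r)) atTop (nhds x) := by
    refine tendsto_const_nhds.congr' ?_
    filter_upwards [tendsto_id_div_log.eventually_gt_atTop 0] with r hr
    rw [mul_div_assoc, div_self hr.ne', mul_one]
  refine (hquot.symm.tendsto_nhds hlim).congr fun r => ?_
  simp only [Pi.div_apply]
  ring
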